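/- Let d ≥ 2. The number of permutations β of {0, 1, ..., d} satisfying β(0) = 0, β(1) = d, and β(i+1) + β(d+1-i) = d for all 1 ≤ i ≤ d-1 equals 2^{⌈d/2⌉ - 1}·⌊(d-1)/2⌋!. -/

import Mathlib

theorem rev_ct (n : ℕ) : (Fin.revPerm : Equiv.Perm (Fin n)).cycleType = Multiset.replicate (n / 2) 2 := by
  have hall : ∀ k ∈ (Fin.revPerm : Equiv.Perm (Fin n)).cycleType, k = 2 := by
    intro k hk
    have h1 := Equiv.Perm.dvd_of_mem_cycleType hk
    have h2 := Equiv.Perm.two_le_of_mem_cycleType hk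
    have h3 : orderOf (Fin.revPerm : Equiv.Perm (Fin n)) ∣ 2 := by
      apply orderOf_dvd_of_pow_eq_one
      ext i
      simp [pow_two]
    have := Nat.le_of_dvd (by norm_num) (h1.trans h3)
    omega
  have hr := Multiset.eq_replicate_card.mpr hall
  have hs := Equiv.Perm.sum_cycleType (Fin.revPerm : Equiv.Perm (Fin n))
  have hcard : (Fin.revPerm : Equiv.Perm (Fin n)).support.card = 2 * (n / 2) := by
    have hc : (Fin.revPerm : Equiv.Perm (Fin n)).supportᶜ.card = n % 2 := by
      rcases Nat.mod_two_eq_zero_or_one n with h | h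
      · rw [h, Finset.card_eq_zero]
        ext i
        simp [Fin.ext_iff, Fin.val_rev]
        omega
      · rw [h, Finset.card_eq_one]
        refine ⟨⟨n / 2, by omega⟩, ?_⟩
        ext i
        simp [Fin.ext_iff, Fin.val_rev]
        omega
    have := Finset.card_add_card_compl (Fin.revPerm : Equiv.Perm (Fin n)).support
    rw [hc, Fintype.card_fin] at this
    omega
  rw [hr, Multiset.sum_replicate, hcard, smul_eq_mul] at hs
  rw [hr]
  congr 1
  omega

theorem cent_card (n : ℕ) :
    Nat.card {σ : Equiv.Perm (Fin n) // ∀ i, (σ i).val + (σ i.rev).val = n - 1} =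
      2 ^ (n / 2) * (n / 2).factorial := by
  have h := Equiv.Perm.nat_card_centralizer (Fin.revPerm : Equiv.Perm (Fin n))
  rw [rev_ct] at h
  have h1 : (n - n / 2 * 2).factorial = 1 := by
    rw [Nat.factorial_eq_one]; omega
  have h2 : ∏ k ∈ (Multiset.replicate (n / 2) 2).toFinset,
      ((Multiset.replicate (n / 2) 2).count k).factorial = (n / 2).factorial := by
    by_cases h0 : n / 2 = 0
    · simp [h0]
    · rw [Multiset.toFinset_replicate, if_neg h0]
      simp
  rw [h2] at h
  simp only [Fintype.card_fin, Multiset.sum_replicate, Multiset.prod_replicate, smul_eq_mul, h1, one_mul] at h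
  rw [← h]
  apply Nat.card_congr
  refine Equiv.subtypeEquivRight ?_
  intro σ
  rw [Subgroup.mem_centralizer_singleton_iff, Equiv.ext_iff]
  refine forall_congr' fun i => ?_
  simp [Fin.ext_iff, Fin.val_rev]
  have := (σ i).isLt
  have := (σ i.rev).isLt
  omega

def mkB (n : ℕ) (σ : Equiv.Perm (Fin n)) (j : Fin (n + 2)) : Fin (n + 2) :=
  if h0 : j.val = 0 then 0
  else if h1 : j.val = 1 then ⟨n + 1, by omega⟩
  else ⟨(σ ⟨j.val - 2, by omega⟩).val + 1, by omega⟩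

theorem mkB_inj (n : ℕ) (σ : Equiv.Perm (Fin n)) : Function.Injective (mkB n σ) := by
  intro a b hab
  unfold mkB at hab
  split_ifs at hab with h1 h2 h3 h4 h5 h6 <;> simp [Fin.ext_iff] at hab ⊢ <;> try omega
  rw [← Fin.ext_iff, σ.injective.eq_iff, Fin.mk.injEq] at hab
  omega

theorem stmt_aux (n : ℕ) :
    Nat.card {β : Equiv.Perm (Fin (n + 1 + 1)) //
        β 0 = 0 ∧
        β ⟨1, by omega⟩ = ⟨n + 1, by omega⟩ ∧
        ∀ (i : ℕ) (_h1 : 1 ≤ i) (_h2 : i ≤ n + 1 - 1),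
          (β ⟨i + 1, by omega⟩).val + (β ⟨n + 1 + 1 - i, by omega⟩).val = n + 1}
      = 2 ^ (n / 2) * (n / 2).factorial := by
  rw [← cent_card]
  symm
  let f (σ : Equiv.Perm (Fin n)) : Equiv.Perm (Fin (n + 2)) :=
    Equiv.ofBijective (mkB n σ) (Finite.injective_iff_bijective.mp (mkB_inj n σ))
  have hf : ∀ σ (k : ℕ) (hk : k + 2 < n + 2), (f σ ⟨k + 2, hk⟩).val = (σ ⟨k, by omega⟩).val + 1 := by
    intro σ k hk
    simp [f, mkB]
  refine Nat.card_congr (Equiv.ofBijective (fun σ => ⟨f σ.1, ?_, ?_, ?_⟩) ⟨?_, ?_⟩)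
  · simp [f, mkB]
  · simp [f, mkB]
  · intro i h1 h2
    obtain ⟨k, rfl⟩ : ∃ k, i = k + 1 := ⟨i - 1, by omega⟩
    have e1 := hf σ.1 k (by omega)
    have e2 := hf σ.1 (n - (k + 1)) (by omega)
    have e3 := σ.2 ⟨k, by omega⟩
    have e4 : (⟨n + 1 + 1 - (k + 1), by omega⟩ : Fin (n + 1 + 1)) = ⟨n - (k + 1) + 2, by omega⟩ := by
      apply Fin.ext; simp; omega
    have e5 : (⟨k, by omega⟩ : Fin n).rev = ⟨n - (k + 1), by omega⟩ := by
      apply Fin.ext; simp [Fin.val_rev]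
    rw [e5] at e3
    rw [e4]
    change (f σ.1 ⟨k + 2, _⟩).val + _ = _
    rw [e1, e2]
    omega
  · intro σ τ h
    apply Subtype.ext
    ext i
    have h' : f σ.1 = f τ.1 := congrArg Subtype.val h
    have e1 := hf σ.1 i (by omega)
    have e2 := hf τ.1 i (by omega)
    rw [h', e2] at e1
    simpa using e1.symm
  · rintro ⟨β, h0, h1, h2⟩
    have hb : ∀ (k : ℕ) (hk : k < n), 1 ≤ (β ⟨k + 2, by omega⟩).val ∧ (β ⟨k + 2, by omega⟩).val ≤ n := by
      intro k hk
      have a0 : β ⟨k + 2, by omega⟩ ≠ 0 := by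
        rw [← h0]; intro h; have := congrArg Fin.val (β.injective h); simp at this
      have a1 : β ⟨k + 2, by omega⟩ ≠ ⟨n + 1, by omega⟩ := by
        rw [← h1]; intro h; have := congrArg Fin.val (β.injective h); simp at this
      have := (β ⟨k + 2, by omega⟩).isLt
      simp only [ne_eq, Fin.ext_iff, Fin.val_zero] at a0 a1
      omega
    let s (i : Fin n) : Fin n := ⟨(β ⟨i.val + 2, by omega⟩).val - 1, by have := hb i.1 i.2; omega⟩
    have hs : Function.Injective s := by
      intro i j hij
      have h3 := congrArg Fin.val hij
      have h4 := hb i.1 i.2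
      have h5 := hb j.1 j.2
      simp only [s] at h3
      have h6 : β ⟨i.val + 2, by omega⟩ = β ⟨j.val + 2, by omega⟩ := by apply Fin.ext; omega
      have := congrArg Fin.val (β.injective h6)
      apply Fin.ext
      simpa using this
    let σ : Equiv.Perm (Fin n) := Equiv.ofBijective s (Finite.injective_iff_bijective.mp hs)
    have hσ : ∀ i : Fin n, (σ i).val + 1 = (β ⟨i.val + 2, by omega⟩).val := by
      intro i
      have h4 := hb i.1 i.2
      change (β ⟨i.val + 2, by omega⟩).val - 1 + 1 = _
      omega
    refine ⟨⟨σ, ?_⟩, ?_⟩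
    · intro i
      have e1 := hσ i
      have e2 := hσ i.rev
      have e3 := h2 (i.val + 1) (by omega) (by omega)
      have e4 : (⟨n + 1 + 1 - (i.val + 1), by omega⟩ : Fin (n + 1 + 1)) = ⟨i.rev.val + 2, by omega⟩ := by
        apply Fin.ext; simp [Fin.val_rev]; omega
      rw [e4] at e3
      change (β ⟨i.val + 2, _⟩).val + _ = _ at e3
      rw [← e1, ← e2] at e3
      omega
    · apply Subtype.ext
      ext j
      change (f σ j).val = _
      obtain ⟨j, hj⟩ := j
      match j, hj with
      | 0, hj => 
        change _ = (β 0).val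
        rw [h0]; simp [f, mkB]
      | 1, hj => rw [h1]; simp [f, mkB]
      | k + 2, hj => rw [hf σ k hj, hσ]

theorem stmt_10 (d : ℕ) (hd : 2 ≤ d) :
    Nat.card {β : Equiv.Perm (Fin (d + 1)) //
        β 0 = 0 ∧
        β ⟨1, by omega⟩ = ⟨d, by omega⟩ ∧
        ∀ (i : ℕ) (_h1 : 1 ≤ i) (_h2 : i ≤ d - 1),
          (β ⟨i + 1, by omega⟩).val + (β ⟨d + 1 - i, by omega⟩).val = d}
      = 2 ^ ((d + 1) / 2 - 1) * Nat.factorial ((d - 1) / 2) := by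
  obtain ⟨n, rfl⟩ : ∃ n, d = n + 1 := ⟨d - 1, by omega⟩
  have h1 : (n + 1 + 1) / 2 - 1 = n / 2 := by omega
  have h2 : (n + 1 - 1) / 2 = n / 2 := by omega
  rw [h1, h2]
  exact stmt_aux n
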